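/- arXiv:2011.12371 — 3 statements merged into one kernel-verified Lean document; each statement's English description precedes it below -/
import Mathlib

section
/- Let I = [0,1] ⊂ ℝ be the closed unit interval. For every natural number n ≥ 2 there exists an identifying function f : Conf_n(I) → I, i.e. a continuous map with f(x) ≠ x(i) for every configuration x and every index i. -/
/-- The ordered configuration space of `n` points in `X`, topologized as a
subspace of the product `X^n`. -/
abbrev Conf (n : ℕ) (X : Type*) [TopologicalSpace X] : Type _ :=
  {x : Fin n → X // Function.Injective x}

/-- For every `n ≥ 2` the closed unit interval `I = [0,1]` admits an identifying
function `f : Conf_n(I) → I`. -/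
theorem interval_identifying_function (n : ℕ) (hn : 2 ≤ n) :
    ∃ f : Conf n (Set.Icc (0 : ℝ) 1) → Set.Icc (0 : ℝ) 1, Continuous f ∧
      ∀ (x : Conf n (Set.Icc (0 : ℝ) 1)) (i : Fin n), f x ≠ x.1 i := by
  obtain ⟨a, b, hab⟩ : ∃ a b : Fin n, b ≠ a :=
    ⟨⟨0, by omega⟩, ⟨1, by omega⟩, by simp [Fin.ext_iff]⟩
  have hb : b ∈ Finset.univ.erase a := by simp [hab]
  let d : Conf n (Set.Icc (0 : ℝ) 1) → ℝ := fun x =>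
    (Finset.univ.erase a).inf' ⟨b, hb⟩ (fun j => |(x.1 j : ℝ) - x.1 a|)
  have hd_le : ∀ x j, j ≠ a → d x ≤ |(x.1 j : ℝ) - x.1 a| := fun x j hj =>
    Finset.inf'_le (fun j => |(x.1 j : ℝ) - x.1 a|) (by simp [hj])
  have hne : ∀ (x : Conf n (Set.Icc (0 : ℝ) 1)) j, j ≠ a → 0 < |(x.1 j : ℝ) - x.1 a| := by
    intro x j hj
    rw [abs_pos, sub_ne_zero]
    exact fun h => hj (x.2 (Subtype.ext h))
  have hd_pos : ∀ x, 0 < d x := by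
    intro x
    refine (Finset.lt_inf'_iff _).2 ?_
    intro j hj
    exact hne x j (Finset.ne_of_mem_erase hj)
  have hx : ∀ j, Continuous fun x : Conf n (Set.Icc (0 : ℝ) 1) => (x.1 j : ℝ) := by
    intro j
    exact continuous_subtype_val.comp ((continuous_apply j).comp continuous_subtype_val)
  have hd_cont : Continuous d :=
    Continuous.finset_inf'_apply _ (fun j _ => ((hx j).sub (hx a)).abs)
  let t : Conf n (Set.Icc (0 : ℝ) 1) → ℝ := fun x => d x / 2 / |(x.1 b : ℝ) - x.1 a|
  have ht_cont : Continuous t :=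
    (hd_cont.div_const 2).div ((hx b).sub (hx a)).abs (fun x => (hne x b hab).ne')
  have ht0 : ∀ x, 0 ≤ t x := fun x => by
    have := hd_pos x
    positivity
  have ht1 : ∀ x, t x ≤ 1 := fun x => by
    have h1 := hd_pos x
    have h2 := hd_le x b hab
    exact (div_le_one (hne x b hab)).2 (by linarith)
  let g : Conf n (Set.Icc (0 : ℝ) 1) → ℝ := fun x => x.1 a + t x * (x.1 b - x.1 a)
  have hg : ∀ x, |g x - x.1 a| = d x / 2 := by
    intro x
    have h1 := hne x b hab
    have : g x - x.1 a = t x * (x.1 b - x.1 a) := by simp [g]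
    rw [this, abs_mul, abs_of_nonneg (ht0 x)]
    exact div_mul_cancel₀ _ h1.ne'
  have hgm : ∀ x, g x ∈ Set.Icc (0 : ℝ) 1 := by
    intro x
    have ha := (x.1 a).2
    have hb' := (x.1 b).2
    have h0 := ht0 x
    have h1 := ht1 x
    have := (convex_Icc (0 : ℝ) 1) ha hb' (sub_nonneg.2 h1) h0 (by ring)
    convert this using 1
    simp only [g, smul_eq_mul]
    ring
  refine ⟨fun x => ⟨g x, hgm x⟩, ?_, ?_⟩
  · exact Continuous.subtype_mk ((hx a).add (ht_cont.mul ((hx b).sub (hx a)))) _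
  · intro x i h
    have h' : g x = x.1 i := congrArg Subtype.val h
    have h1 := hg x
    have h2 := hd_pos x
    rw [h'] at h1
    by_cases hi : i = a
    · subst hi
      simp at h1
      linarith
    · have := hd_le x i hi
      linarith
end

section
/- For a natural number k ≥ 1, let S_k ⊂ ℂ be the k-star S_k = ⋃_{j=0}^{k−1} {t·exp(2πij/k) : t ∈ ℝ, 0 ≤ t ≤ 1} (k unit segments emanating from the origin at equally spaced angles). For every k ≥ 1 and every natural number n ≥ 2 there exists an identifying function f : Conf_n(S_k) → S_k, i.e. a continuous map with f(x) ≠ x(i) for every configuration x and every index i. -/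
/-- The `k`-star: `k` unit segments emanating from the origin at equally spaced
angles, the `j`-th segment being `{t · exp(2πij/k) : 0 ≤ t ≤ 1}`. -/
def kStar (k : ℕ) : Set ℂ :=
  ⋃ j ∈ Finset.range k,
    (fun t : ℝ => (t : ℂ) * Complex.exp (((2 * Real.pi * j / k : ℝ) : ℂ) * Complex.I)) ''
      Set.Icc 0 1

/-- Coordinate model of the star. -/
def starT (k : ℕ) : Set (Fin k → ℝ) :=
  {c | (∀ j, 0 ≤ c j ∧ c j ≤ 1) ∧ ∀ i j, i ≠ j → c i * c j = 0}

/-- The path metric. -/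
def starD {k : ℕ} (a b : Fin k → ℝ) : ℝ := ∑ j, |a j - b j|

/-- The point at distance `s` from `a` on the path from `a` to `b`. -/
def starP {k : ℕ} (a b : Fin k → ℝ) (s : ℝ) : Fin k → ℝ :=
  fun j => max (min (a j) (b j)) (max (a j - s) (b j - (starD a b - s)))

theorem starT_single {k : ℕ} (hk : 1 ≤ k) {c : Fin k → ℝ} (hc : c ∈ starT k) :
    ∃ j t, 0 ≤ t ∧ t ≤ 1 ∧ c = Pi.single j t := by
  obtain ⟨h1, h2⟩ := hc
  by_cases h : ∃ j, c j ≠ 0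
  · obtain ⟨j, hj⟩ := h
    refine ⟨j, c j, (h1 j).1, (h1 j).2, ?_⟩
    ext i
    by_cases hij : i = j
    · subst hij; simp
    · have := h2 i j hij
      simp only [mul_eq_zero, hj, or_false] at this
      simp [hij, this]
  · push Not at h
    refine ⟨⟨0, hk⟩, 0, le_rfl, zero_le_one, ?_⟩
    ext i
    simp [h i]

theorem single_mem_starT {k : ℕ} (j : Fin k) {t : ℝ} (h0 : 0 ≤ t) (h1 : t ≤ 1) :
    (Pi.single j t : Fin k → ℝ) ∈ starT k := by
  refine ⟨fun i => ?_, fun i l hil => ?_⟩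
  · by_cases h : i = j
    · subst h; simp [h0, h1]
    · simp [h]
  · by_cases h : i = j
    · subst h; simp [hil.symm]
    · simp [h]

theorem starD_same {k : ℕ} (j : Fin k) (t r : ℝ) :
    starD (Pi.single j t) (Pi.single j r) = |t - r| := by
  unfold starD
  rw [Finset.sum_eq_single j]
  · simp
  · intro i _ h; simp [h]
  · simp

theorem starD_diff {k : ℕ} {j l : Fin k} (h : j ≠ l) {t r : ℝ} (ht : 0 ≤ t) (hr : 0 ≤ r) :
    starD (Pi.single j t) (Pi.single l r) = t + r := by
  unfold starD
  rw [Fintype.sum_eq_add j l h]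
  · simp [h, h.symm, abs_of_nonneg, ht, hr]
  · intro i hi; simp [hi.1, hi.2]

theorem starP_spec {k : ℕ} (hk : 1 ≤ k) {a b : Fin k → ℝ} (ha : a ∈ starT k) (hb : b ∈ starT k)
    {s : ℝ} (hs : 0 ≤ s) (hsD : s ≤ starD a b) :
    starP a b s ∈ starT k ∧ starD a (starP a b s) = s := by
  obtain ⟨j, t, ht0, ht1, rfl⟩ := starT_single hk ha
  obtain ⟨l, r, hr0, hr1, rfl⟩ := starT_single hk hb
  by_cases hjl : j = l
  · subst hjl
    have hD := starD_same j t r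
    rw [hD] at hsD
    rcases le_total t r with h | h
    · rw [abs_of_nonpos (by linarith)] at hD hsD
      have : starP (Pi.single j t) (Pi.single j r) s = Pi.single j (t + s) := by
        ext i
        unfold starP
        rw [hD]
        by_cases hi : i = j
        · subst hi; simp only [Pi.single_eq_same]; grind
        · simp only [Pi.single_eq_of_ne hi]; grind
      rw [this]
      refine ⟨single_mem_starT _ (by linarith) (by linarith), ?_⟩
      rw [starD_same, abs_of_nonpos (by linarith)]; ring
    · rw [abs_of_nonneg (by linarith)] at hD hsD
      have : starP (Pi.single j t) (Pi.single j r) s = Pi.single j (t - s) := by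
        ext i
        unfold starP
        rw [hD]
        by_cases hi : i = j
        · subst hi; simp only [Pi.single_eq_same]; grind
        · simp only [Pi.single_eq_of_ne hi]; grind
      rw [this]
      refine ⟨single_mem_starT _ (by linarith) (by linarith), ?_⟩
      rw [starD_same, abs_of_nonneg (by linarith)]; ring
  · have hD := starD_diff hjl ht0 hr0
    rw [hD] at hsD
    rcases le_total s t with h | h
    · have : starP (Pi.single j t) (Pi.single l r) s = Pi.single j (t - s) := by
        ext i
        unfold starP
        rw [hD]
        by_cases hi : i = j
        · subst hi; simp only [Pi.single_eq_same, Pi.single_eq_of_ne hjl]; grind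
        · by_cases hl : i = l
          · subst hl; simp only [Pi.single_eq_same, Pi.single_eq_of_ne hi]; grind
          · simp only [Pi.single_eq_of_ne hi, Pi.single_eq_of_ne hl]; grind
      rw [this]
      refine ⟨single_mem_starT _ (by linarith) (by linarith), ?_⟩
      rw [starD_same, abs_of_nonneg (by linarith)]; ring
    · have : starP (Pi.single j t) (Pi.single l r) s = Pi.single l (s - t) := by
        ext i
        unfold starP
        rw [hD]
        by_cases hi : i = j
        · subst hi; simp only [Pi.single_eq_same, Pi.single_eq_of_ne hjl]; grind
        · by_cases hl : i = l
          · subst hl; simp only [Pi.single_eq_same, Pi.single_eq_of_ne hi]; grind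
          · simp only [Pi.single_eq_of_ne hi, Pi.single_eq_of_ne hl]; grind
      rw [this]
      refine ⟨single_mem_starT _ (by linarith) (by linarith), ?_⟩
      rw [starD_diff hjl ht0 (by linarith)]; ring

theorem starD_pos {k : ℕ} {a b : Fin k → ℝ} (h : a ≠ b) : 0 < starD a b := by
  obtain ⟨j, hj⟩ := Function.ne_iff.1 h
  exact Finset.sum_pos' (fun i _ => abs_nonneg _) ⟨j, Finset.mem_univ _, abs_pos.2 (sub_ne_zero.2 hj)⟩

theorem starD_self {k : ℕ} (a : Fin k → ℝ) : starD a a = 0 := by simp [starD]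

theorem starT_identifying (k : ℕ) (hk : 1 ≤ k) (n : ℕ) (hn : 2 ≤ n) :
    ∃ f : Conf n (starT k) → starT k, Continuous f ∧
      ∀ (x : Conf n (starT k)) (i : Fin n), f x ≠ x.1 i := by
  let i0 : Fin n := ⟨0, by omega⟩
  let i1 : Fin n := ⟨1, by omega⟩
  have h01 : i1 ≠ i0 := by simp [i0, i1]
  let E : Finset (Fin n) := Finset.univ.erase i0
  have hE1 : i1 ∈ E := by simp [E, h01]
  have hE : E.Nonempty := ⟨i1, hE1⟩
  let s : Conf n (starT k) → ℝ := fun x =>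
    E.inf' hE (fun i => starD (x.1 i0 : Fin k → ℝ) (x.1 i)) / 2
  have hpos : ∀ x, 0 < s x := by
    intro x
    refine half_pos ((Finset.lt_inf'_iff _).2 fun i hi => starD_pos fun h => ?_)
    exact (Finset.ne_of_mem_erase hi) (x.2 (Subtype.ext h)).symm
  have hlt : ∀ x, ∀ i ∈ E, s x < starD (x.1 i0 : Fin k → ℝ) (x.1 i) := by
    intro x i hi
    have h1 := hpos x
    have h2 := Finset.inf'_le (fun i => starD (x.1 i0 : Fin k → ℝ) (x.1 i)) hi
    simp only [s] at h1 ⊢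
    linarith
  have hco : ∀ (i : Fin n) (j : Fin k),
      Continuous fun x : Conf n (starT k) => (x.1 i : Fin k → ℝ) j := fun i j =>
    (continuous_apply j).comp
      (continuous_subtype_val.comp ((continuous_apply i).comp continuous_subtype_val))
  have hDc : ∀ i : Fin n,
      Continuous fun x : Conf n (starT k) => starD (x.1 i0 : Fin k → ℝ) (x.1 i) := fun i =>
    continuous_finsetSum _ fun j _ => ((hco i0 j).sub (hco i j)).abs
  have hsc : Continuous s := by
    refine Continuous.div_const (Continuous.finset_inf'_apply hE fun i _ => hDc i) _
  have hspec := fun x => starP_spec hk (x.1 i0 : starT k).2 (x.1 i1 : starT k).2 (hpos x).le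
    (hlt x i1 hE1).le
  refine ⟨fun x => ⟨starP (x.1 i0) (x.1 i1) (s x), (hspec x).1⟩, ?_, ?_⟩
  · refine Continuous.subtype_mk ?_ _
    refine continuous_pi fun j => ?_
    exact ((hco i0 j).min (hco i1 j)).max
      (((hco i0 j).sub hsc).max ((hco i1 j).sub ((hDc i1).sub hsc)))
  · intro x i h
    have h2 := (hspec x).2
    have h3 := congrArg Subtype.val h
    simp only at h3
    rw [h3] at h2
    by_cases hi : i = i0
    · subst hi
      rw [starD_self] at h2
      exact absurd h2 (hpos x).ne
    · have := hlt x i (by simp [E, hi])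
      linarith

/-- The unit vectors. -/
noncomputable def starU (k : ℕ) (j : ℕ) : ℂ :=
  Complex.exp (((2 * Real.pi * j / k : ℝ) : ℂ) * Complex.I)

theorem starU_norm (k j : ℕ) : ‖starU k j‖ = 1 := Complex.norm_exp_ofReal_mul_I _

theorem starU_inj {k : ℕ} (hk : 1 ≤ k) {i j : Fin k} (h : starU k i = starU k j) : i = j := by
  have key : ∀ j : ℕ, starU k j = Complex.exp (2 * Real.pi * Complex.I / k) ^ j := by
    intro j
    rw [← Complex.exp_nat_mul, starU]
    congr 1
    push_cast
    ring
  rw [key, key] at h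
  exact Fin.ext ((Complex.isPrimitiveRoot_exp k (by omega)).pow_inj i.2 j.2 h)

theorem mem_kStar_iff {k : ℕ} {z : ℂ} :
    z ∈ kStar k ↔ ∃ (j : Fin k) (t : ℝ), 0 ≤ t ∧ t ≤ 1 ∧ z = t * starU k j := by
  simp only [kStar, Set.mem_iUnion, Set.mem_image, Finset.mem_range, starU]
  constructor
  · rintro ⟨j, hj, t, ht, rfl⟩
    exact ⟨⟨j, hj⟩, t, ht.1, ht.2, rfl⟩
  · rintro ⟨j, t, h0, h1, rfl⟩
    exact ⟨j, j.2, t, ⟨h0, h1⟩, rfl⟩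

/-- The realization map. -/
noncomputable def starPhi (k : ℕ) (c : Fin k → ℝ) : ℂ := ∑ j, (c j : ℂ) * starU k j

theorem starPhi_single {k : ℕ} (j : Fin k) (t : ℝ) :
    starPhi k (Pi.single j t) = t * starU k j := by
  unfold starPhi
  rw [Finset.sum_eq_single j]
  · simp
  · intro i _ h; simp [h]
  · simp

theorem starHomeo (k : ℕ) (hk : 1 ≤ k) : Nonempty (starT k ≃ₜ kStar k) := by
  have hcl : IsClosed (starT k) := by
    have : starT k = (⋂ j, {c : Fin k → ℝ | 0 ≤ c j} ∩ {c | c j ≤ 1}) ∩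
        ⋂ i, ⋂ j, ⋂ (_ : i ≠ j), {c | c i * c j = 0} := by
      ext c; simp [starT]
    rw [this]
    refine IsClosed.inter (isClosed_iInter fun j => IsClosed.inter ?_ ?_)
      (isClosed_iInter fun i => isClosed_iInter fun j => isClosed_iInter fun _ => ?_)
    · exact isClosed_le (by fun_prop) (by fun_prop)
    · exact isClosed_le (by fun_prop) (by fun_prop)
    · exact isClosed_eq (by fun_prop) (by fun_prop)
  have hcomp : IsCompact (starT k) := by
    refine IsCompact.of_isClosed_subset (isCompact_Icc (a := (0 : Fin k → ℝ)) (b := 1)) hcl ?_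
    intro c hc
    exact ⟨fun j => (hc.1 j).1, fun j => (hc.1 j).2⟩
  have : CompactSpace (starT k) := isCompact_iff_compactSpace.1 hcomp
  let F : starT k → kStar k := fun c => ⟨starPhi k c, by
    obtain ⟨j, t, h0, h1, h⟩ := starT_single hk c.2
    rw [h, starPhi_single]
    exact mem_kStar_iff.2 ⟨j, t, h0, h1, rfl⟩⟩
  have hFc : Continuous F := by
    refine Continuous.subtype_mk ?_ _
    refine continuous_finsetSum _ fun j _ => Continuous.mul ?_ continuous_const
    exact Complex.continuous_ofReal.comp ((continuous_apply j).comp continuous_subtype_val)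
  have hF : Function.Bijective F := by
    constructor
    · rintro ⟨a, ha⟩ ⟨b, hb⟩ hab
      have h := congrArg Subtype.val hab
      simp only [F] at h
      obtain ⟨j, t, ht0, ht1, rfl⟩ := starT_single hk ha
      obtain ⟨l, r, hr0, hr1, rfl⟩ := starT_single hk hb
      rw [starPhi_single, starPhi_single] at h
      have hn := congrArg norm h
      simp only [norm_mul, starU_norm, Complex.norm_real, Real.norm_of_nonneg ht0,
        Real.norm_of_nonneg hr0, mul_one] at hn
      subst hn
      apply Subtype.ext
      by_cases h0 : t = 0
      · subst h0; simp
      · have := mul_left_cancel₀ (Complex.ofReal_ne_zero.2 h0) h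
        exact congrArg (fun j => (Pi.single j t : Fin k → ℝ)) (starU_inj hk this)
    · rintro ⟨z, hz⟩
      obtain ⟨j, t, h0, h1, rfl⟩ := mem_kStar_iff.1 hz
      exact ⟨⟨_, single_mem_starT j h0 h1⟩, Subtype.ext (starPhi_single j t)⟩
  exact ⟨Continuous.homeoOfEquivCompactToT2 (f := Equiv.ofBijective F hF) hFc⟩

/-- For every `k ≥ 1` and `n ≥ 2` the `k`-star admits an identifying function
`f : Conf_n(S_k) → S_k`. -/
theorem kStar_identifying_function (k : ℕ) (hk : 1 ≤ k) (n : ℕ) (hn : 2 ≤ n) :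
    ∃ f : Conf n (kStar k) → kStar k, Continuous f ∧
      ∀ (x : Conf n (kStar k)) (i : Fin n), f x ≠ x.1 i := by
  obtain ⟨e⟩ := starHomeo k hk
  obtain ⟨f, hf, hne⟩ := starT_identifying k hk n hn
  let g : Conf n (kStar k) → Conf n (starT k) := fun x =>
    ⟨fun i => e.symm (x.1 i), e.symm.injective.comp x.2⟩
  have hg : Continuous g := by
    refine Continuous.subtype_mk ?_ _
    refine continuous_pi fun i => e.symm.continuous.comp ?_
    exact (continuous_apply i).comp continuous_subtype_val
  refine ⟨fun x => e (f (g x)), e.continuous.comp (hf.comp hg), fun x i h => ?_⟩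
  refine hne (g x) i ?_
  simp only [g]
  rw [← h, e.symm_apply_apply]
end

section
/- Let X be a topological space, n ≥ 1 a natural number, and α : [0,1] → Conf_n(X) a path (a continuous map into the ordered configuration space). For each t ∈ [0,1] write A(t) = X ∖ {α(t)(1), …, α(t)(n)}. Suppose C, D : [0,1] → Set X are such that for every t, C(t) and D(t) are connected components of A(t) (that is, nonempty maximal connected subsets of A(t)). Assume: (1) C is monotone, i.e. C(t) ⊆ C(s) whenever t ≤ s; (2) D is locally consistent, i.e. for every t ∈ [0,1] and every point p ∈ D(t) there exists ε > 0 such that p ∈ D(s) for all s ∈ [0,1] with |s − t| < ε; and (3) C(0) = D(0). Then C(t) = D(t) for all t ∈ [0,1]. -/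
/-- Growing components lemma: along a path `α` in `Conf_n(X)`, a monotone system
of connected components `C` of the complements `A(t) = X ∖ {α(t)(1), …, α(t)(n)}`
is the unique locally consistent system of components with its starting
component. -/
theorem monotone_system_unique_locally_consistent
    (X : Type*) [TopologicalSpace X] (n : ℕ) (hn : 1 ≤ n)
    (α : unitInterval → Conf n X) (hα : Continuous α)
    (C D : unitInterval → Set X)
    (hC : ∀ t : unitInterval, ∃ p ∈ {q : X | ∀ i : Fin n, q ≠ (α t).1 i},
      C t = connectedComponentIn {q : X | ∀ i : Fin n, q ≠ (α t).1 i} p)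
    (hD : ∀ t : unitInterval, ∃ p ∈ {q : X | ∀ i : Fin n, q ≠ (α t).1 i},
      D t = connectedComponentIn {q : X | ∀ i : Fin n, q ≠ (α t).1 i} p)
    (hmono : ∀ t s : unitInterval, t ≤ s → C t ⊆ C s)
    (hloc : ∀ (t : unitInterval) (p : X), p ∈ D t →
      ∃ ε > (0 : ℝ), ∀ s : unitInterval, |s.1 - t.1| < ε → p ∈ D s)
    (h0 : C 0 = D 0) :
    ∀ t : unitInterval, C t = D t := by
  -- two components sharing a point agree
  have key : ∀ (t : unitInterval) (p : X), p ∈ C t → p ∈ D t → C t = D t := by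
    intro t p hp hq
    obtain ⟨a, -, ha⟩ := hC t
    obtain ⟨b, -, hb⟩ := hD t
    rw [ha] at hp
    rw [hb] at hq
    rw [ha, hb, connectedComponentIn_eq hp, connectedComponentIn_eq hq]
  have hne : ∀ t : unitInterval, ∃ p, p ∈ D t := by
    intro t
    obtain ⟨b, hb, h⟩ := hD t
    exact ⟨b, by rw [h]; exact mem_connectedComponentIn hb⟩
  by_contra hcon
  push Not at hcon
  obtain ⟨t₀, ht₀⟩ := hcon
  let B : Set ℝ := {x | ∃ t : unitInterval, t.1 = x ∧ C t ≠ D t}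
  have hBne : B.Nonempty := ⟨t₀.1, t₀, rfl, ht₀⟩
  have hBb : BddBelow B := ⟨0, by rintro x ⟨t, rfl, -⟩; exact t.2.1⟩
  have hm0 : 0 ≤ sInf B := le_csInf hBne (by rintro x ⟨t, rfl, -⟩; exact t.2.1)
  have hm1 : sInf B ≤ 1 := (csInf_le hBb ⟨t₀, rfl, ht₀⟩).trans t₀.2.2
  obtain ⟨m, hm⟩ : ∃ m : unitInterval, m.1 = sInf B := ⟨⟨sInf B, hm0, hm1⟩, rfl⟩
  have hlt : ∀ s : unitInterval, s.1 < m.1 → C s = D s := by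
    intro s hs
    by_contra h
    have := csInf_le hBb (show s.1 ∈ B from ⟨s, rfl, h⟩)
    linarith
  obtain ⟨p, hp⟩ := hne m
  obtain ⟨ε, hε, hs⟩ := hloc m p hp
  have hmeq : C m = D m := by
    rcases eq_or_lt_of_le m.2.1 with h | h
    · have : m = 0 := Subtype.ext h.symm
      rw [this, h0]
    · have hm1' := m.2.2
      have h1 : max 0 (m.1 - ε / 2) < m.1 := max_lt h (by linarith)
      let s : unitInterval := ⟨max 0 (m.1 - ε / 2), le_max_left _ _, by linarith⟩
      have h2 : m.1 - ε / 2 ≤ s.1 := le_max_right _ _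
      have h3 : s.1 < m.1 := h1
      have h4 : p ∈ D s := hs s (by rw [abs_lt]; constructor <;> linarith)
      rw [← hlt s h3] at h4
      exact key m p (hmono s m h3.le h4) hp
  obtain ⟨x, ⟨b, rfl, hb⟩, hbm⟩ :=
    exists_lt_of_csInf_lt hBne (show sInf B < m.1 + ε by linarith)
  have hmb : m.1 ≤ b.1 := hm ▸ csInf_le hBb ⟨b, rfl, hb⟩
  exact hb (key b p (hmono m b hmb (hmeq ▸ hp))
    (hs b (by rw [abs_lt]; constructor <;> linarith)))
end
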